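/- If S is an almost-clique minimal separator of a finite simple graph G, then filling S into a clique does not increase the treewidth: tw(G ∪ K(S)) = tw(G). -/

import Mathlib

/-- A tree-decomposition of a graph `G` indexed by nodes of type `ι`. -/
structure TreeDecomp {V : Type} (G : SimpleGraph V) (ι : Type) where
  tree : SimpleGraph ι
  isTree : tree.IsTree
  bag : ι → Finset V
  bags_cover : ∀ v : V, ∃ i : ι, v ∈ bag i
  edges_covered : ∀ ⦃u v : V⦄, G.Adj u v → ∃ i : ι, u ∈ bag i ∧ v ∈ bag i
  bags_connected : ∀ v : V, (tree.induce {i : ι | v ∈ bag i}).Connected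

/-- The treewidth of `G`: the smallest `k` such that `G` has a tree-decomposition
all of whose bags have at most `k + 1` vertices (i.e. of width at most `k`). -/
noncomputable def treewidth {V : Type} (G : SimpleGraph V) : ℕ :=
  sInf { k : ℕ | ∃ (ι : Type) (td : TreeDecomp G ι), ∀ i : ι, (td.bag i).card ≤ k + 1 }

/-- The neighborhood `N_G(C)` of a vertex set `C`. -/
def nbhd {V : Type} (G : SimpleGraph V) (C : Set V) : Set V :=
  {v : V | v ∉ C ∧ ∃ u ∈ C, G.Adj u v}

/-- `S` separates `a` from `b` in `G`: `a, b ∉ S` and every walk from `a` to `b` meets `S`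
(so `a` and `b` lie in distinct components of `G` minus `S`). -/
def Separates {V : Type} (G : SimpleGraph V) (S : Set V) (a b : V) : Prop :=
  a ∉ S ∧ b ∉ S ∧ ∀ p : G.Walk a b, ∃ v ∈ p.support, v ∈ S

/-- `C` is a connected component of `G` minus `S`. -/
def IsCompOf {V : Type} (G : SimpleGraph V) (S : Set V) (C : Set V) : Prop :=
  C.Nonempty ∧ Disjoint C S ∧ (G.induce C).Connected ∧
    ∀ D : Set V, C ⊆ D → Disjoint D S → (G.induce D).Connected → D = C

/-- `S` is a separator of `G`: `G` minus `S` has more than one connected component. -/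
def IsSeparator {V : Type} (G : SimpleGraph V) (S : Set V) : Prop :=
  ∃ C D : Set V, IsCompOf G S C ∧ IsCompOf G S D ∧ C ≠ D

/-- `C` is a full component of `S` in `G`. -/
def IsFullCompOf {V : Type} (G : SimpleGraph V) (S : Set V) (C : Set V) : Prop :=
  IsCompOf G S C ∧ nbhd G C = S

/-- `S` is a minimal separator of `G`: it has at least two full components. -/
def IsMinSep {V : Type} (G : SimpleGraph V) (S : Set V) : Prop :=
  ∃ C D : Set V, IsFullCompOf G S C ∧ IsFullCompOf G S D ∧ C ≠ D

/-- `R` crosses `S` if `R` separates some pair of vertices of `S`. -/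
def Crosses {V : Type} (G : SimpleGraph V) (R S : Set V) : Prop :=
  ∃ a b : V, a ∈ S ∧ b ∈ S ∧ Separates G R a b

/-- `G` is chordal: every cycle with more than 3 vertices has a chord. -/
def IsChordal {V : Type} (G : SimpleGraph V) : Prop :=
  ∀ ⦃v : V⦄ (c : G.Walk v v), c.IsCycle → 3 < c.length →
    ∃ u w : V, u ∈ c.support ∧ w ∈ c.support ∧ G.Adj u w ∧ s(u, w) ∉ c.edges

/-- `H` is a triangulation of `G`. -/
def IsTriangulationOf {V : Type} (H G : SimpleGraph V) : Prop :=
  IsChordal H ∧ G ≤ H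

/-- `H` is a minimal triangulation of `G`. -/
def IsMinimalTriangulationOf {V : Type} (H G : SimpleGraph V) : Prop :=
  IsTriangulationOf H G ∧ ∀ H' : SimpleGraph V, IsTriangulationOf H' G → H' ≤ H → H' = H

/-- `K(S)`: the graph on the same vertex type whose edges join all pairs of
distinct vertices of `S`. -/
def completeOn {V : Type} (S : Set V) : SimpleGraph V :=
  SimpleGraph.fromRel (fun a b => a ∈ S ∧ b ∈ S)

/-- `s` is a maximal clique of `G`. -/
def IsMaximalClique {V : Type} (G : SimpleGraph V) (s : Set V) : Prop :=
  G.IsClique s ∧ ∀ t : Set V, G.IsClique t → s ⊆ t → s = t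

/-- `fill G td`: fill every bag of the tree-decomposition `td` into a clique. -/
def fill {V ι : Type} (G : SimpleGraph V) (td : TreeDecomp G ι) : SimpleGraph V :=
  G ⊔ SimpleGraph.fromRel (fun a b => ∃ i : ι, a ∈ td.bag i ∧ b ∈ td.bag i)

/-- The nodes of the maximal subtree `T(i,j)` of the tree containing `i` but not `j`
(for adjacent `i`, `j`): the nodes reachable from `i` after deleting the edge `{i, j}`. -/
def sideNodes {V ι : Type} {G : SimpleGraph V} (td : TreeDecomp G ι) (i j : ι) : Set ι :=
  {t : ι | (td.tree.deleteEdges {s(i, j)}).Reachable i t}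

/-- `V(i,j)`: the union of the bags of nodes in `T(i,j)`, with the vertices of the
bag of `j` removed. -/
def sideVerts {V ι : Type} {G : SimpleGraph V} (td : TreeDecomp G ι) (i j : ι) : Set V :=
  (⋃ t ∈ sideNodes td i j, (td.bag t : Set V)) \ (td.bag j : Set V)

/-- A perfect elimination order of `G`. -/
def IsPerfectElimOrder {V : Type} [Fintype V] (G : SimpleGraph V)
    (e : Fin (Fintype.card V) ≃ V) : Prop :=
  ∀ i : Fin (Fintype.card V),
    G.IsClique {u : V | G.Adj (e i) u ∧ ∃ j : Fin (Fintype.card V), i < j ∧ e j = u}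

/-- `H` is a minor of `G`, via the branch-set (minor model) characterization. -/
def IsMinorOf {W V : Type} (H : SimpleGraph W) (G : SimpleGraph V) : Prop :=
  ∃ B : W → Set V,
    (∀ w : W, (B w).Nonempty) ∧
    (∀ w : W, (G.induce (B w)).Connected) ∧
    (Pairwise fun w₁ w₂ : W => Disjoint (B w₁) (B w₂)) ∧
    ∀ ⦃w₁ w₂ : W⦄, H.Adj w₁ w₂ → ∃ a ∈ B w₁, ∃ b ∈ B w₂, G.Adj a b

/-- There is a clique minor of `G` minus `C` rooted on `R`, given by branch sets
`B v ∋ v` for `v ∈ R`: disjoint from `C`, pairwise disjoint, each connected, with an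
edge of `G` between every two of them. -/
def HasCliqueMinorRootedAvoiding {V : Type} (G : SimpleGraph V) (R C : Set V) : Prop :=
  ∃ B : R → Set V,
    (∀ v : R, (v : V) ∈ B v) ∧
    (∀ v : R, Disjoint (B v) C) ∧
    (∀ v : R, (G.induce (B v)).Connected) ∧
    (∀ u v : R, u ≠ v → Disjoint (B u) (B v)) ∧
    (∀ u v : R, u ≠ v → ∃ a ∈ B u, ∃ b ∈ B v, G.Adj a b)

/-- `S` is a minor-safe separator of `G`: for every component `C` of `G` minus `S`,
there is a clique minor of `G` minus `C` rooted on `N_G(C)`. -/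
def MinorSafe {V : Type} (G : SimpleGraph V) (S : Set V) : Prop :=
  ∀ C : Set V, IsCompOf G S C → HasCliqueMinorRootedAvoiding G (nbhd G C) C

/-!
Let `C` and `D` be two full components of `S`, and let `q ∈ S` be such that `S \ {q}` is a clique.
Contracting `D` onto `q` turns `S` into a clique without touching `C`, so `G ∪ K(S)` restricted to
`C ∪ S` is a minor of `G`; contracting `C` onto `q` shows the same for the restriction to `V \ C`.
Both restrictions therefore have treewidth at most `tw(G)`, and since `G ∪ K(S)` is their sum along
the clique `S`, so does `G ∪ K(S)`: by the Helly property of subtrees, `S` lies in a single bag of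
each tree-decomposition, and joining two such bags by an edge glues the decompositions together.
-/

section Trees

open SimpleGraph

variable {α β κ : Type*} {T : SimpleGraph α} {T' : SimpleGraph β}

lemma exists_walk_forall_mem_of_preconnected_induce {A : Set α}
    (hA : (T.induce A).Preconnected) {a b : α} (ha : a ∈ A) (hb : b ∈ A) :
    ∃ w : T.Walk a b, ∀ x ∈ w.support, x ∈ A := by
  obtain ⟨w⟩ := hA ⟨a, ha⟩ ⟨b, hb⟩
  refine ⟨w.map (Embedding.induce A).toHom, fun x hx => ?_⟩
  obtain ⟨y, -, rfl⟩ := List.mem_map.1 (Walk.support_map (Embedding.induce A).toHom w ▸ hx)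
  exact y.2

-- `m` is the node at which the walk `p` first enters the subtree `B`.
lemma exists_mem_forall_walk_mem_support (hT : T.IsAcyclic) {B : Set α}
    (hB : (T.induce B).Preconnected) {x y : α} (p : T.Walk x y) (hy : y ∈ B) :
    ∃ m ∈ B, ∀ z ∈ B, ∀ w : T.Walk x z, m ∈ w.support := by
  induction p with
  | nil => exact ⟨_, hy, fun _ _ w => w.start_mem_support⟩
  | @cons x x' y hxx' p ih =>
    by_cases hxB : x ∈ B
    · exact ⟨x, hxB, fun _ _ w => w.start_mem_support⟩
    obtain ⟨m, hmB, hm⟩ := ih hy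
    refine ⟨m, hmB, fun z hz w => ?_⟩
    have hmem : m = x' ∨ m ∈ w.support := by
      simpa only [Walk.support_cons, List.mem_cons] using hm z hz (.cons hxx'.symm w)
    rcases hmem with rfl | hmw
    · obtain ⟨u, hu⟩ := exists_walk_forall_mem_of_preconnected_induce hB hz hmB
      have hedge : s(x, m) ∈ (w.append u).edges :=
        isBridge_iff_forall_walk_mem_edges.1 (isAcyclic_iff_forall_adj_isBridge.1 hT hxx') _
      rw [Walk.edges_append, List.mem_append] at hedge
      rcases hedge with hedge | hedge
      · exact w.snd_mem_support_of_mem_edges hedge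
      · exact absurd (hu x (u.fst_mem_support_of_mem_edges hedge)) hxB
    · exact hmw

lemma helly_of_isTree (hT : T.IsTree) {A : κ → Set α} {s : Finset κ}
    (hA : ∀ v ∈ s, (T.induce (A v)).Preconnected)
    (hAA : ∀ u ∈ s, ∀ v ∈ s, (A u ∩ A v).Nonempty) : ∃ m, ∀ v ∈ s, m ∈ A v := by
  classical
  induction s using Finset.induction_on with
  | empty => exact ⟨hT.connected.nonempty.some, by simp⟩
  | insert b s _ ih =>
    simp only [Finset.forall_mem_insert] at hA hAA ⊢
    obtain ⟨x, hx⟩ := ih hA.2 fun u hu => (hAA.2 u hu).2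
    obtain ⟨y, hy, -⟩ := hAA.1.1
    obtain ⟨p⟩ := hT.connected.preconnected x y
    obtain ⟨m, hmb, hm⟩ := exists_mem_forall_walk_mem_support hT.isAcyclic hA.1 p hy
    refine ⟨m, hmb, fun v hv => ?_⟩
    obtain ⟨z, hzv, hzb⟩ := (hAA.2 v hv).1
    obtain ⟨w, hw⟩ := exists_walk_forall_mem_of_preconnected_induce (hA.2 v hv) (hx v hv) hzv
    exact hw m (hm z hzb w)

lemma reachable_sum_inl_iff {a b : α} :
    (T ⊕g T').Reachable (Sum.inl a) (Sum.inl b) ↔ T.Reachable a b := by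
  refine ⟨fun h => ?_, fun h => h.map Embedding.sumInl.toHom⟩
  rw [reachable_iff_reflTransGen] at h ⊢
  refine h.lift' (Sum.elim id fun _ => a) ?_
  rintro (u | u) (v | v) huv
  · exact .single (sum_adj_inl.1 huv)
  · exact absurd huv (by simp)
  · exact absurd huv (by simp)
  · exact .refl

lemma reachable_sum_inr_iff {a b : β} :
    (T ⊕g T').Reachable (Sum.inr a) (Sum.inr b) ↔ T'.Reachable a b :=
  Iso.sumComm.reachable_iff.symm.trans reachable_sum_inl_iff

lemma isBridge_sum_inl {u v : α} (h : T.IsBridge s(u, v)) :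
    (T ⊕g T').IsBridge s(Sum.inl u, Sum.inl v) := by
  have hdelete : (T ⊕g T').deleteEdges {s(Sum.inl u, Sum.inl v)} =
      T.deleteEdges {s(u, v)} ⊕g T' := by
    ext (a | a) (b | b) <;> simp
  rwa [isBridge_iff, hdelete, reachable_sum_inl_iff, ← isBridge_iff]

lemma isBridge_sum_inr {u v : β} (h : T'.IsBridge s(u, v)) :
    (T ⊕g T').IsBridge s(Sum.inr u, Sum.inr v) := by
  have hdelete : (T ⊕g T').deleteEdges {s(Sum.inr u, Sum.inr v)} =
      T ⊕g T'.deleteEdges {s(u, v)} := by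
    ext (a | a) (b | b) <;> simp
  rwa [isBridge_iff, hdelete, reachable_sum_inr_iff, ← isBridge_iff]

lemma isAcyclic_sum (hT : T.IsAcyclic) (hT' : T'.IsAcyclic) : (T ⊕g T').IsAcyclic := by
  rw [isAcyclic_iff_forall_adj_isBridge] at hT hT' ⊢
  rintro (a | a) (b | b) hab
  · exact isBridge_sum_inl (hT (sum_adj_inl.1 hab))
  · exact absurd hab (by simp)
  · exact absurd hab (by simp)
  · exact isBridge_sum_inr (hT' (sum_adj_inr.1 hab))

lemma isTree_sum_sup_edge (hT : T.IsTree) (hT' : T'.IsTree) (i : α) (j : β) :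
    ((T ⊕g T') ⊔ edge (Sum.inl i) (Sum.inr j)).IsTree :=
  ⟨hT.connected.sum_sup_edge hT'.connected,
    (isAcyclic_sum hT.isAcyclic hT'.isAcyclic).sup_edge_of_not_reachable
      (not_reachable_sum_inl_inr i j)⟩

lemma preconnected_induce_sum_sup_edge {i : α} {j : β} {R : Set (α ⊕ β)}
    (hl : (T.induce (Sum.inl ⁻¹' R)).Preconnected) (hr : (T'.induce (Sum.inr ⁻¹' R)).Preconnected)
    (hij : ∀ a b, Sum.inl a ∈ R → Sum.inr b ∈ R → Sum.inl i ∈ R ∧ Sum.inr j ∈ R) :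
    (((T ⊕g T') ⊔ edge (Sum.inl i) (Sum.inr j)).induce R).Preconnected := by
  set U := (T ⊕g T') ⊔ edge (Sum.inl i) (Sum.inr j)
  let homl : T.induce (Sum.inl ⁻¹' R) →g U.induce R :=
    induceHom ((Hom.ofLE le_sup_left).comp Embedding.sumInl.toHom) fun _ h => h
  let homr : T'.induce (Sum.inr ⁻¹' R) →g U.induce R :=
    induceHom ((Hom.ofLE le_sup_left).comp Embedding.sumInr.toHom) fun _ h => h
  have hlr : ∀ a b (ha : Sum.inl a ∈ R) (hb : Sum.inr b ∈ R),
      (U.induce R).Reachable ⟨Sum.inl a, ha⟩ ⟨Sum.inr b, hb⟩ := by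
    intro a b ha hb
    obtain ⟨hi, hj⟩ := hij a b ha hb
    have hadj : (U.induce R).Adj ⟨Sum.inl i, hi⟩ ⟨Sum.inr j, hj⟩ := by simp [U, edge_adj]
    exact ((hl ⟨a, ha⟩ ⟨i, hi⟩).map homl).trans
      (hadj.reachable.trans ((hr ⟨j, hj⟩ ⟨b, hb⟩).map homr))
  rintro ⟨a | a, ha⟩ ⟨b | b, hb⟩
  · exact (hl ⟨a, ha⟩ ⟨b, hb⟩).map homl
  · exact hlr a b ha hb
  · exact (hlr b a hb ha).symm
  · exact (hr ⟨a, ha⟩ ⟨b, hb⟩).map homr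

end Trees

section TreeDecompositions

variable {V W ι κ : Type} {G H : SimpleGraph V} {A B : Set V} {k : ℕ}

/-- `G` has treewidth at most `k`. Unlike `treewidth G ≤ k`, this fails when `G` has no
tree-decomposition of bounded width. -/
def TreewidthLE (G : SimpleGraph V) (k : ℕ) : Prop :=
  ∃ (ι : Type) (td : TreeDecomp G ι), ∀ i : ι, (td.bag i).card ≤ k + 1

lemma TreewidthLE.mono (hGH : G ≤ H) (hH : TreewidthLE H k) : TreewidthLE G k := by
  obtain ⟨ι, td, htd⟩ := hH
  exact ⟨ι, { td with edges_covered := fun u v huv => td.edges_covered (hGH huv) }, htd⟩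

namespace TreeDecomp

lemma exists_finset_subset_bag (td : TreeDecomp G ι) {K : Finset V}
    (hK : G.IsClique (K : Set V)) : ∃ i, K ⊆ td.bag i := by
  refine helly_of_isTree td.isTree (fun v _ => (td.bags_connected v).preconnected)
    fun u hu v hv => ?_
  by_cases huv : u = v
  · obtain ⟨i, hi⟩ := td.bags_cover v
    exact ⟨i, huv ▸ hi, hi⟩
  · exact td.edges_covered (hK hu hv huv)

lemma exists_subset_bag (td : TreeDecomp G ι) {n : ℕ} (hn : ∀ i, (td.bag i).card ≤ n)
    {K : Set V} (hK : G.IsClique K) : ∃ i, K ⊆ td.bag i := by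
  have hfin : K.Finite := by
    by_contra hinf
    obtain ⟨K', hK', hcard⟩ := Set.Infinite.exists_subset_card_eq hinf (n + 1)
    obtain ⟨i, hi⟩ := td.exists_finset_subset_bag (hK.subset hK')
    have := (Finset.card_le_card hi).trans (hn i)
    omega
  lift K to Finset V using hfin
  simpa only [Finset.coe_subset] using td.exists_finset_subset_bag hK

/-- The nodes of a tree-decomposition whose bags meet the vertex set `X`; these span a subtree
when `X` is connected. -/
def nodesMeeting (td : TreeDecomp G ι) (X : Set V) : Set ι :=
  {i | ∃ x ∈ X, x ∈ td.bag i}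

lemma connected_induce_nodesMeeting (td : TreeDecomp G ι) {X : Set V}
    (hX : (G.induce X).Connected) : (td.tree.induce (td.nodesMeeting X)).Connected := by
  have hsub : ∀ x : X, {i | (x : V) ∈ td.bag i} ⊆ td.nodesMeeting X := fun x _ hi => ⟨x, x.2, hi⟩
  have hvertex : ∀ (x : X) (i j : ι) (hi : (x : V) ∈ td.bag i) (hj : (x : V) ∈ td.bag j),
      (td.tree.induce (td.nodesMeeting X)).Reachable ⟨i, x, x.2, hi⟩ ⟨j, x, x.2, hj⟩ :=
    fun x i j hi hj => ((td.bags_connected x).preconnected ⟨i, hi⟩ ⟨j, hj⟩).map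
      (SimpleGraph.induceHomOfLE _ (hsub x)).toHom
  have hwalk : ∀ {x y : X}, (G.induce X).Walk x y → ∀ (i j : ι) (hi : (x : V) ∈ td.bag i)
      (hj : (y : V) ∈ td.bag j),
      (td.tree.induce (td.nodesMeeting X)).Reachable ⟨i, x, x.2, hi⟩ ⟨j, y, y.2, hj⟩ := by
    intro x y w
    induction w with
    | nil => exact hvertex _
    | @cons x z y hxz _ ih =>
      intro i j hi hj
      obtain ⟨l, hlx, hlz⟩ := td.edges_covered hxz
      exact (hvertex x i l hi hlx).trans (ih l j hlz hj)
  obtain ⟨x⟩ := hX.nonempty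
  obtain ⟨i, hi⟩ := td.bags_cover x
  refine SimpleGraph.connected_iff _ |>.2 ⟨?_, ⟨⟨i, x, x.2, hi⟩⟩⟩
  rintro ⟨i, x, hx, hi⟩ ⟨j, y, hy, hj⟩
  obtain ⟨w⟩ := hX.preconnected ⟨x, hx⟩ ⟨y, hy⟩
  exact hwalk w i j hi hj

lemma preconnected_induce_mem_map_bag (td : TreeDecomp (G.induce A) ι) (v : V) :
    (td.tree.induce {i | v ∈ (td.bag i).map (.subtype _)}).Preconnected := by
  by_cases hv : v ∈ A
  · have hmem : {i | v ∈ (td.bag i).map (.subtype _)} = {i | ⟨v, hv⟩ ∈ td.bag i} := by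
      ext i
      simp [hv]
    exact hmem ▸ (td.bags_connected ⟨v, hv⟩).preconnected
  · rintro ⟨i, hi⟩
    simp [hv] at hi

lemma exists_inter_subset_map_bag (td : TreeDecomp (G.induce A) ι) {n : ℕ}
    (hn : ∀ i, (td.bag i).card ≤ n) (hclique : G.IsClique (A ∩ B)) :
    ∃ i, A ∩ B ⊆ (td.bag i).map (.subtype _) := by
  obtain ⟨i, hi⟩ := td.exists_subset_bag hn (K := Subtype.val ⁻¹' B)
    fun u hu v hv huv => hclique ⟨u.2, hu⟩ ⟨v.2, hv⟩ (Subtype.coe_ne_coe.2 huv)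
  exact ⟨i, fun v hv => Finset.mem_map_of_mem _ (hi (a := ⟨v, hv.1⟩) hv.2)⟩

end TreeDecomp

lemma TreewidthLE.of_induce_of_isClique_inter (hAB : A ∪ B = Set.univ)
    (hadj : ∀ u v, G.Adj u v → u ∈ A ∧ v ∈ A ∨ u ∈ B ∧ v ∈ B) (hclique : G.IsClique (A ∩ B))
    (hA : TreewidthLE (G.induce A) k) (hB : TreewidthLE (G.induce B) k) : TreewidthLE G k := by
  obtain ⟨ι, td, htd⟩ := hA
  obtain ⟨κ, td', htd'⟩ := hB
  obtain ⟨i, hi⟩ := td.exists_inter_subset_map_bag htd hclique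
  obtain ⟨j, hj⟩ := td'.exists_inter_subset_map_bag htd' (Set.inter_comm A B ▸ hclique)
  let bag : ι ⊕ κ → Finset V :=
    Sum.elim (fun a => (td.bag a).map (.subtype _)) (fun b => (td'.bag b).map (.subtype _))
  have hcover : ∀ v, ∃ x, v ∈ bag x := fun v => by
    rcases hAB.ge (Set.mem_univ v) with hv | hv
    · obtain ⟨a, ha⟩ := td.bags_cover ⟨v, hv⟩
      exact ⟨Sum.inl a, Finset.mem_map_of_mem _ ha⟩
    · obtain ⟨b, hb⟩ := td'.bags_cover ⟨v, hv⟩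
      exact ⟨Sum.inr b, Finset.mem_map_of_mem _ hb⟩
  have hij : ∀ v a b, v ∈ bag (Sum.inl a) → v ∈ bag (Sum.inr b) →
      v ∈ bag (Sum.inl i) ∧ v ∈ bag (Sum.inr j) := fun v a b ha hb => by
    have hvA := Finset.property_of_mem_map_subtype _ ha
    have hvB := Finset.property_of_mem_map_subtype _ hb
    exact ⟨hi ⟨hvA, hvB⟩, hj ⟨hvB, hvA⟩⟩
  refine ⟨ι ⊕ κ, { tree := (td.tree ⊕g td'.tree) ⊔ SimpleGraph.edge (Sum.inl i) (Sum.inr j)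
                   isTree := isTree_sum_sup_edge td.isTree td'.isTree i j
                   bag := bag
                   bags_cover := hcover
                   edges_covered := fun u v huv => ?_
                   bags_connected := fun v => ?_ }, ?_⟩
  · rcases hadj u v huv with ⟨hu, hv⟩ | ⟨hu, hv⟩
    · obtain ⟨a, ha⟩ := td.edges_covered (u := ⟨u, hu⟩) (v := ⟨v, hv⟩) huv
      exact ⟨Sum.inl a, ha.imp (Finset.mem_map_of_mem _) (Finset.mem_map_of_mem _)⟩
    · obtain ⟨b, hb⟩ := td'.edges_covered (u := ⟨u, hu⟩) (v := ⟨v, hv⟩) huv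
      exact ⟨Sum.inr b, hb.imp (Finset.mem_map_of_mem _) (Finset.mem_map_of_mem _)⟩
  · have : Nonempty {x | v ∈ bag x} := nonempty_subtype.2 (hcover v)
    exact ⟨preconnected_induce_sum_sup_edge (td.preconnected_induce_mem_map_bag v)
      (td'.preconnected_induce_mem_map_bag v) (hij v)⟩
  · rintro (a | b)
    · exact (Finset.card_map _).trans_le (htd a)
    · exact (Finset.card_map _).trans_le (htd' b)

lemma exists_finset_card_le_of_pairwise_disjoint {V W : Type*} {X : W → Set V}
    (hX : Pairwise fun u w => Disjoint (X u) (X w)) (s : Finset V) :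
    ∃ t : Finset W, (∀ w, w ∈ t ↔ ∃ x ∈ X w, x ∈ s) ∧ t.card ≤ s.card := by
  classical
  choose owner howner using fun x : {x | ∃ w, x ∈ X w} => x.2
  refine ⟨(s.subtype (· ∈ {x | ∃ w, x ∈ X w})).image owner, fun w => ?_,
    Finset.card_image_le.trans ((Finset.card_subtype _ _).trans_le (Finset.card_filter_le _ _))⟩
  rw [Finset.mem_image]
  constructor
  · rintro ⟨x, hxs, rfl⟩
    exact ⟨x, howner x, Finset.mem_subtype.1 hxs⟩
  · rintro ⟨x, hxw, hxs⟩
    refine ⟨⟨x, w, hxw⟩, Finset.mem_subtype.2 hxs, hX.eq ?_⟩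
    exact Set.not_disjoint_iff.2 ⟨x, howner _, hxw⟩

lemma TreewidthLE.of_isMinorOf {H : SimpleGraph W} (hG : TreewidthLE G k) (hH : IsMinorOf H G) :
    TreewidthLE H k := by
  obtain ⟨X, -, hconn, hdisj, hadj⟩ := hH
  obtain ⟨ι, td, htd⟩ := hG
  choose bag hbag hcard using fun i => exists_finset_card_le_of_pairwise_disjoint hdisj (td.bag i)
  have hsubtree : ∀ w, (td.tree.induce {i | w ∈ bag i}).Connected := fun w => by
    have hnodes : {i | w ∈ bag i} = td.nodesMeeting (X w) := Set.ext fun i => hbag i w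
    exact hnodes ▸ td.connected_induce_nodesMeeting (hconn w)
  refine ⟨ι, { tree := td.tree
               isTree := td.isTree
               bag := bag
               bags_cover := fun w => ?_
               edges_covered := fun u w huw => ?_
               bags_connected := hsubtree }, fun i => (hcard i).trans (htd i)⟩
  · obtain ⟨i⟩ := (hsubtree w).nonempty
    exact ⟨i, i.2⟩
  · obtain ⟨x, hx, y, hy, hxy⟩ := hadj huw
    obtain ⟨i, hxi, hyi⟩ := td.edges_covered hxy
    exact ⟨i, (hbag i u).2 ⟨x, hx, hxi⟩, (hbag i w).2 ⟨y, hy, hyi⟩⟩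

end TreeDecompositions

section Separators

variable {V : Type} {G : SimpleGraph V} {S C D : Set V} {k : ℕ}

lemma completeOn_adj {u v : V} : (completeOn S).Adj u v ↔ u ≠ v ∧ u ∈ S ∧ v ∈ S := by
  rw [completeOn, SimpleGraph.fromRel_adj]
  tauto

lemma HasCliqueMinorRootedAvoiding.isMinorOf_induce (h : HasCliqueMinorRootedAvoiding G S C) :
    IsMinorOf ((G ⊔ completeOn S).induce (C ∪ S)) G := by
  obtain ⟨B, hmem, havoid, hconn, hdisj, hadj⟩ := h
  let B' : V → Set V := fun v => insert v {x | ∃ hv : v ∈ S, x ∈ B ⟨v, hv⟩}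
  have hBS : ∀ v : S, B' v = B v := fun v => by
    simpa [B'] using Set.insert_eq_of_mem (hmem v)
  have hB : ∀ v ∉ S, B' v = {v} := fun v hv => by simp [B', hv]
  have hBC : ∀ (u : S), ∀ v ∈ C, v ∉ B u := fun u v hv hvu => Set.disjoint_left.1 (havoid u) hvu hv
  refine ⟨fun v => B' v, fun v => ⟨v, Set.mem_insert _ _⟩, ?_, ?_, ?_⟩
  · rintro ⟨v, -⟩
    change (G.induce (B' v)).Connected
    by_cases hv : v ∈ S
    · exact hBS ⟨v, hv⟩ ▸ hconn ⟨v, hv⟩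
    · exact hB v hv ▸ SimpleGraph.Connected.of_subsingleton
  · rintro ⟨u, hu⟩ ⟨v, hv⟩ huv
    have huv' : u ≠ v := fun h => huv (Subtype.ext h)
    by_cases huS : u ∈ S <;> by_cases hvS : v ∈ S
    · simpa only [hBS ⟨u, huS⟩, hBS ⟨v, hvS⟩] using hdisj ⟨u, huS⟩ ⟨v, hvS⟩ (by simpa using huv')
    · simpa only [hBS ⟨u, huS⟩, hB v hvS, Set.disjoint_singleton_right] using
        hBC _ v (hv.resolve_right hvS)
    · simpa only [hB u huS, hBS ⟨v, hvS⟩, Set.disjoint_singleton_left] using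
        hBC _ u (hu.resolve_right huS)
    · simpa only [hB u huS, hB v hvS, Set.disjoint_singleton] using huv'
  · rintro ⟨u, _⟩ ⟨v, _⟩ (huv | huv)
    · exact ⟨u, Set.mem_insert _ _, v, Set.mem_insert _ _, huv⟩
    · obtain ⟨hne, hu, hv⟩ := completeOn_adj.1 huv
      simpa only [hBS ⟨u, hu⟩, hBS ⟨v, hv⟩] using hadj ⟨u, hu⟩ ⟨v, hv⟩ fun h =>
        hne (congrArg Subtype.val h)

lemma HasCliqueMinorRootedAvoiding.of_isClique_diff_singleton {q : V}
    (hclique : G.IsClique (S \ {q})) (hD : (G.induce D).Connected) (hSD : S ⊆ nbhd G D)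
    (hDC : Disjoint D C) (hSC : Disjoint S C) : HasCliqueMinorRootedAvoiding G S C := by
  have hnotMem : ∀ v ∈ S, v ∉ D := fun v hv => (hSD hv).1
  have hqD : ∀ v ∈ S, ∃ d ∈ D, G.Adj d v := fun v hv => (hSD hv).2
  refine ⟨fun v => insert ↑v {x ∈ D | v = q}, fun v => Set.mem_insert _ _, ?_, ?_, ?_, ?_⟩
  · rintro ⟨v, hv⟩
    exact Set.disjoint_insert_left.2
      ⟨Set.disjoint_left.1 hSC hv, hDC.mono_left (Set.sep_subset _ _)⟩
  · rintro ⟨v, hv⟩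
    change (G.induce (insert v {x ∈ D | v = q})).Connected
    by_cases hvq : v = q
    · obtain ⟨d, hd, hdv⟩ := hqD v hv
      have hinsert : insert v {x ∈ D | v = q} = {v} ∪ D := by simp [hvq]
      exact hinsert ▸ SimpleGraph.connected_induce_union .of_subsingleton hD.preconnected rfl hd
        hdv.symm
    · have hinsert : insert v {x ∈ D | v = q} = {v} := by simp [hvq]
      exact hinsert ▸ SimpleGraph.Connected.of_subsingleton
  · rintro ⟨u, hu⟩ ⟨v, hv⟩ huv
    have huD := hnotMem u hu
    have hvD := hnotMem v hv
    rw [Set.disjoint_left]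
    grind
  · rintro ⟨u, hu⟩ ⟨v, hv⟩ huv
    have huv' : u ≠ v := fun h => huv (Subtype.ext h)
    by_cases huq : u = q
    · obtain ⟨d, hd, hdv⟩ := hqD v hv
      exact ⟨d, .inr ⟨hd, huq⟩, v, .inl rfl, hdv⟩
    by_cases hvq : v = q
    · obtain ⟨d, hd, hdu⟩ := hqD u hu
      exact ⟨u, .inl rfl, d, .inr ⟨hd, hvq⟩, hdu.symm⟩
    · exact ⟨u, .inl rfl, v, .inl rfl, hclique ⟨hu, huq⟩ ⟨hv, hvq⟩ huv'⟩

lemma TreewidthLE.sup_completeOn (hCS : nbhd G C ⊆ S) (hC : HasCliqueMinorRootedAvoiding G S C)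
    (hC' : HasCliqueMinorRootedAvoiding G S (C ∪ S)ᶜ) (hG : TreewidthLE G k) :
    TreewidthLE (G ⊔ completeOn S) k := by
  have hclique : (G ⊔ completeOn S).IsClique ((C ∪ S) ∩ ((C ∪ S)ᶜ ∪ S)) := by
    intro u hu v hv huv
    exact Or.inr (completeOn_adj.2 ⟨huv, hu.2.resolve_left (· hu.1), hv.2.resolve_left (· hv.1)⟩)
  have hC_adj : ∀ {x y}, x ∈ C → G.Adj x y → y ∈ C ∪ S := fun {x y} hx hxy =>
    or_iff_not_imp_left.2 fun hy => hCS ⟨hy, x, hx, hxy⟩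
  have hcompl : ∀ {x}, x ∉ C → x ∈ (C ∪ S)ᶜ ∪ S := by grind
  refine .of_induce_of_isClique_inter (A := C ∪ S) (B := (C ∪ S)ᶜ ∪ S) ?_ ?_ hclique
    (hG.of_isMinorOf hC.isMinorOf_induce) (hG.of_isMinorOf hC'.isMinorOf_induce)
  · rw [← Set.union_assoc, Set.union_compl_self, Set.univ_union]
  · rintro u v (huv | huv)
    · by_cases hu : u ∈ C
      · exact .inl ⟨.inl hu, hC_adj hu huv⟩
      by_cases hv : v ∈ C
      · exact .inl ⟨hC_adj hv huv.symm, .inl hv⟩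
      · exact .inr ⟨hcompl hu, hcompl hv⟩
    · obtain ⟨-, hu, hv⟩ := completeOn_adj.1 huv
      exact .inl ⟨.inr hu, .inr hv⟩

lemma IsCompOf.disjoint (hC : IsCompOf G S C) (hD : IsCompOf G S D) (hne : C ≠ D) :
    Disjoint C D := by
  by_contra hCD
  have hconn := SimpleGraph.induce_union_connected hC.2.2.1.preconnected hD.2.2.1.preconnected
    (Set.not_disjoint_iff_nonempty_inter.1 hCD)
  have hdisj : Disjoint (C ∪ D) S := Set.disjoint_union_left.2 ⟨hC.2.1, hD.2.1⟩
  exact hne ((hC.2.2.2 _ Set.subset_union_left hdisj hconn).symm.trans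
    (hD.2.2.2 _ Set.subset_union_right hdisj hconn))

end Separators

-- An equivalence for each width, because `treewidth` takes the junk value `0` on graphs without a
-- tree-decomposition of bounded width.
theorem treewidth_fill_almostClique_minSep_general {V : Type} (G : SimpleGraph V) (S : Set V)
    (hac : ∃ q, G.IsClique (S \ {q})) (hminsep : IsMinSep G S) (k : ℕ) :
    TreewidthLE (G ⊔ completeOn S) k ↔ TreewidthLE G k := by
  obtain ⟨q, hclique⟩ := hac
  obtain ⟨C, D, ⟨hC, hCS⟩, ⟨hD, hDS⟩, hne⟩ := hminsep
  have hminor : HasCliqueMinorRootedAvoiding G S C :=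
    .of_isClique_diff_singleton hclique hD.2.2.1 hDS.ge (hC.disjoint hD hne).symm hC.2.1.symm
  have hminor' : HasCliqueMinorRootedAvoiding G S (C ∪ S)ᶜ :=
    .of_isClique_diff_singleton hclique hC.2.2.1 hCS.ge
      (Set.disjoint_compl_right_iff_subset.2 Set.subset_union_left)
      (Set.disjoint_compl_right_iff_subset.2 Set.subset_union_right)
  exact ⟨.mono le_sup_left, .sup_completeOn hCS.le hminor hminor'⟩

/-- filling an almost-clique minimal separator into a clique does not
increase the treewidth. -/
theorem treewidth_fill_almostClique_minSep {V : Type} [Fintype V] (G : SimpleGraph V)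
    (S : Set V) (hac : ∃ q ∈ S, G.IsClique (S \ {q})) (hminsep : IsMinSep G S) :
    treewidth (G ⊔ completeOn S) = treewidth G :=
  congrArg sInf <| Set.ext <|
    treewidth_fill_almostClique_minSep_general G S (hac.imp fun _ => And.right) hminsep
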